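/- Let Q be a regular local ring, f₁,…,f_c a Q-regular sequence, and R = Q/(f₁,…,f_c) (a local complete intersection). Let M and N be finitely generated R-modules. If Tor_i^R(M,N) = 0 for all sufficiently large i, then Tor_i^R(M,N) = 0 for all i > dim R. -/

import Mathlib

/-!
STATEMENT 8: Over a local complete intersection `R = Q ⧸ (f₁, …, f_c)` (an AB ring), if `M`, `N`
are finitely generated `R`-modules with `Tor_i^R(M, N) = 0` for all sufficiently large `i`, then
`Tor_i^R(M, N) = 0` for all `i > dim R`.
-/

open CategoryTheory CategoryTheory.Limits

universe u

/-- A Noetherian local ring is regular if its maximal ideal can be generated by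
(Krull dimension of the ring) many elements. -/
def IsRegularLocal (Q : Type u) [CommRing Q] [IsLocalRing Q] : Prop :=
  IsNoetherianRing Q ∧ ∃ s : Finset Q, Ideal.span (s : Set Q) = IsLocalRing.maximalIdeal Q ∧
    (s.card : WithBot ℕ∞) = ringKrullDim Q

/-!
`Tor_i(M, N)` is dual to `Ext^i(N, M⋆)`, where `M⋆` is the character module, so the bound may be
proved for `Ext` instead, for arbitrary modules. Let `x` be `A`-regular and `B = A ⧸ (x)`. For a
`B`-module `N` with first syzygy `K` over `A`, the snake lemma gives `0 → N → K / xK → L → 0` with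
`L` a first syzygy of `N` over `B`, and `Ext_B(K / xK, X) = Ext_A(K, X)` because `x` is
`K`-regular. The long exact sequence relates `Ext_B^{i + 1}(N, X)`, `Ext_A^{i + 2}(N, X)` and
`Ext_B^{i + 3}(N, X)`, so a bound `d + 1` over `A` descends to a bound `d` over `B`, in steps of
two from the range where `Ext_B` is known to vanish. Over a regular local ring of dimension `d` all
injective dimensions are at most `d`, and killing a regular sequence of length `c` lowers both the
bound and the dimension by `c`.
-/

open Abelian

section ExtShortExact

universe w v' u'

variable {C : Type u'} [Category.{v'} C] [Abelian C] [HasExt.{w} C] {S : ShortComplex C} {X : C}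

lemma subsingleton_ext_X₂ (hS : S.ShortExact) {i : ℕ} (h₁ : Subsingleton (Ext S.X₁ X i))
    (h₃ : Subsingleton (Ext S.X₃ X i)) : Subsingleton (Ext S.X₂ X i) := by
  refine subsingleton_of_forall_eq 0 fun e ↦ ?_
  obtain ⟨e', rfl⟩ := Ext.contravariant_sequence_exact₂ hS X e (h₁.elim _ _)
  rw [h₃.elim e' 0, Ext.comp_zero]

lemma subsingleton_ext_X₁ (hS : S.ShortExact) {i : ℕ} (h₂ : Subsingleton (Ext S.X₂ X i))
    (h₃ : Subsingleton (Ext S.X₃ X (i + 1))) : Subsingleton (Ext S.X₁ X i) := by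
  refine subsingleton_of_forall_eq 0 fun e ↦ ?_
  obtain ⟨e', rfl⟩ := Ext.contravariant_sequence_exact₁ hS X e (add_comm 1 i) (h₃.elim _ _)
  rw [h₂.elim e' 0, Ext.comp_zero]

lemma subsingleton_ext_X₃ (hS : S.ShortExact) {i : ℕ} (h₁ : Subsingleton (Ext S.X₁ X i))
    (h₂ : Subsingleton (Ext S.X₂ X (i + 1))) : Subsingleton (Ext S.X₃ X (i + 1)) := by
  refine subsingleton_of_forall_eq 0 fun e ↦ ?_
  obtain ⟨e', rfl⟩ := Ext.contravariant_sequence_exact₃ hS X e (h₂.elim _ _) (add_comm 1 i)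
  rw [h₁.elim e' 0, Ext.comp_zero]

lemma subsingleton_ext_X₃_add_two_iff [Projective S.X₂] (hS : S.ShortExact) (i : ℕ) :
    Subsingleton (Ext S.X₃ X (i + 2)) ↔ Subsingleton (Ext S.X₁ X (i + 1)) :=
  ⟨subsingleton_ext_X₁ hS (Ext.subsingleton_of_projective S.X₂ X i),
    fun h ↦ subsingleton_ext_X₃ hS h (Ext.subsingleton_of_projective S.X₂ X (i + 1))⟩

lemma subsingleton_ext_X₃_one_iff [Projective S.X₂] (hS : S.ShortExact) :
    Subsingleton (Ext S.X₃ X 1) ↔ ∀ φ : S.X₁ ⟶ X, ∃ ψ : S.X₂ ⟶ X, S.f ≫ ψ = φ := by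
  constructor
  · intro h φ
    obtain ⟨e, he⟩ := Ext.contravariant_sequence_exact₁ hS X (Ext.mk₀ φ) (add_comm 1 0) (h.elim _ _)
    obtain ⟨ψ, rfl⟩ := (Ext.mk₀_bijective _ _).2 e
    exact ⟨ψ, (Ext.mk₀_bijective _ _).1 (by rwa [Ext.mk₀_comp_mk₀] at he)⟩
  · intro h
    refine subsingleton_of_forall_eq 0 fun e ↦ ?_
    obtain ⟨e', rfl⟩ := Ext.contravariant_sequence_exact₃ hS X e
      ((Ext.subsingleton_of_projective S.X₂ X 0).elim _ _) (add_comm 1 0)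
    obtain ⟨φ, rfl⟩ := (Ext.mk₀_bijective _ _).2 e'
    obtain ⟨ψ, rfl⟩ := h φ
    rw [← Ext.mk₀_comp_mk₀]
    exact hS.extClass_comp_assoc _

end ExtShortExact

section ExtModule

variable {R : Type u} [CommRing R] {K P N : Type u} [AddCommGroup K] [Module R K] [AddCommGroup P]
  [Module R P] [AddCommGroup N] [Module R N] {f : K →ₗ[R] P} {g : P →ₗ[R] N}

lemma shortExact_shortComplexOfCompEqZero (hf : Function.Injective f) (hfg : Function.Exact f g)
    (hg : Function.Surjective g) :
    (ModuleCat.shortComplexOfCompEqZero f g hfg.linearMap_comp_eq_zero).ShortExact :=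
  ModuleCat.shortComplex_shortExact _ hfg hf hg

variable [Module.Projective R P] {X : ModuleCat.{u} R}

lemma subsingleton_ext_add_two_iff_of_exact (hf : Function.Injective f) (hfg : Function.Exact f g)
    (hg : Function.Surjective g) (i : ℕ) :
    Subsingleton (Ext (ModuleCat.of R N) X (i + 2)) ↔
      Subsingleton (Ext (ModuleCat.of R K) X (i + 1)) :=
  have : Projective (ModuleCat.of R P) := inferInstance
  subsingleton_ext_X₃_add_two_iff (shortExact_shortComplexOfCompEqZero hf hfg hg) i

lemma subsingleton_ext_one_iff_of_exact (hf : Function.Injective f) (hfg : Function.Exact f g)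
    (hg : Function.Surjective g) :
    Subsingleton (Ext (ModuleCat.of R N) X 1) ↔ ∀ φ : K →ₗ[R] X, ∃ ψ : P →ₗ[R] X, ψ ∘ₗ f = φ := by
  have : Projective (ModuleCat.of R P) := inferInstance
  refine (subsingleton_ext_X₃_one_iff (shortExact_shortComplexOfCompEqZero hf hfg hg)).trans
    ⟨fun h φ ↦ ?_, fun h φ ↦ ?_⟩
  · obtain ⟨ψ, hψ⟩ := h (ModuleCat.ofHom φ)
    exact ⟨ψ.hom, congrArg ModuleCat.Hom.hom hψ⟩
  · obtain ⟨ψ, hψ⟩ := h φ.hom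
    exact ⟨ModuleCat.ofHom ψ, ModuleCat.hom_ext hψ⟩

variable (R N) in
lemma exists_finsupp_presentation :
    ∃ (K : ModuleCat.{u} R) (f : K →ₗ[R] N →₀ R) (g : (N →₀ R) →ₗ[R] N),
      Function.Injective f ∧ Function.Exact f g ∧ Function.Surjective g :=
  ⟨.of R (LinearMap.ker (Finsupp.linearCombination R (id : N → N))), Submodule.subtype _,
    Finsupp.linearCombination R id, Submodule.injective_subtype _,
    LinearMap.exact_subtype_ker_map _, Finsupp.linearCombination_id_surjective R N⟩

end ExtModule

section QuotSMulTop

open Function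
open scoped Pointwise

variable {A : Type*} [CommRing A] {x : A} {K F L N X : Type*}
  [AddCommGroup K] [Module A K] [AddCommGroup F] [Module A F] [AddCommGroup L] [Module A L]
  [AddCommGroup N] [Module A N] [Module (A ⧸ Ideal.span {x}) N]
  [IsScalarTower A (A ⧸ Ideal.span {x}) N]
  [AddCommGroup X] [Module A X] [Module (A ⧸ Ideal.span {x}) X]
  [IsScalarTower A (A ⧸ Ideal.span {x}) X]

lemma smul_eq_zero_of_isScalarTower_quotient_span_singleton (n : N) : x • n = 0 := by
  rw [← algebraMap_smul (A ⧸ Ideal.span {x}), Ideal.Quotient.algebraMap_eq,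
    Ideal.Quotient.mk_singleton_self, zero_smul]

/-- The universal property of reduction modulo `x`: an `A`-linear map from `K` to an
`A ⧸ (x)`-module is an `A ⧸ (x)`-linear map from `K / xK`. -/
def quotSMulTopHomEquiv :
    (QuotSMulTop x K →ₗ[A ⧸ Ideal.span {x}] X) ≃ (K →ₗ[A] X) where
  toFun φ := φ.restrictScalars A ∘ₗ Submodule.mkQ _
  invFun g := ((x • (⊤ : Submodule A K)).liftQ g (by
    rintro _ ⟨k, -, rfl⟩
    simp [smul_eq_zero_of_isScalarTower_quotient_span_singleton])).extendScalarsOfSurjective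
      Ideal.Quotient.mk_surjective
  left_inv φ := LinearMap.ext ((Submodule.mkQ_surjective _).forall.2 fun _ ↦ rfl)
  right_inv _ := rfl

variable (x) in
/-- The `A ⧸ (x)`-linear map `K / xK → F / xF` induced by an `A`-linear map `K → F`. -/
def quotSMulTopMap (f : K →ₗ[A] F) :
    QuotSMulTop x K →ₗ[A ⧸ Ideal.span {x}] QuotSMulTop x F :=
  (QuotSMulTop.map x f).extendScalarsOfSurjective Ideal.Quotient.mk_surjective

lemma quotSMulTopHomEquiv_comp_quotSMulTopMap
    (φ : QuotSMulTop x F →ₗ[A ⧸ Ideal.span {x}] X) (f : K →ₗ[A] F) :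
    quotSMulTopHomEquiv (φ ∘ₗ quotSMulTopMap x f) = quotSMulTopHomEquiv φ ∘ₗ f :=
  rfl

lemma quotSMulTopMap_injective {f : K →ₗ[A] F} {g : F →ₗ[A] L} (hf : Injective f)
    (hfg : Exact f g) (hL : IsSMulRegular L x) : Injective (quotSMulTopMap x f) := by
  have h0 : Exact (0 : K →ₗ[A] K) f := (LinearMap.exact_zero_iff_injective K f).2 hf
  have h := QuotSMulTop.map_first_exact_on_four_term_exact_of_isSMulRegular_last h0 hfg hL
  rw [map_zero] at h
  exact (LinearMap.exact_zero_iff_injective _ _).1 h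

lemma quotSMulTopMap_exact {f : K →ₗ[A] F} {g : F →ₗ[A] L} (hfg : Exact f g) (hg : Surjective g) :
    Exact (quotSMulTopMap x f) (quotSMulTopMap x g) :=
  QuotSMulTop.map_exact x hfg hg

lemma quotSMulTopMap_surjective {f : K →ₗ[A] F} (hf : Surjective f) :
    Surjective (quotSMulTopMap x f) :=
  QuotSMulTop.map_surjective x hf

lemma forall_exists_comp_quotSMulTopMap_eq_iff (f : K →ₗ[A] F) :
    (∀ φ : QuotSMulTop x K →ₗ[A ⧸ Ideal.span {x}] X, ∃ ψ, ψ ∘ₗ quotSMulTopMap x f = φ) ↔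
      ∀ φ : K →ₗ[A] X, ∃ ψ, ψ ∘ₗ f = φ := by
  rw [quotSMulTopHomEquiv.forall_congr_left]
  refine forall_congr' fun φ ↦ quotSMulTopHomEquiv.exists_congr fun ψ ↦ ?_
  rw [Equiv.eq_symm_apply, quotSMulTopHomEquiv_comp_quotSMulTopMap]

end QuotSMulTop

section Reduction

open Function

variable {A : Type*} [CommRing A] {x : A} {K F N : Type*}
  [AddCommGroup K] [Module A K] [AddCommGroup F] [Module A F]
  [AddCommGroup N] [Module A N] [Module (A ⧸ Ideal.span {x}) N]
  [IsScalarTower A (A ⧸ Ideal.span {x}) N] {f : K →ₗ[A] F} {g : F →ₗ[A] N}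

lemma exact_quotSMulTopMap_quotSMulTopHomEquiv_symm (hfg : Exact f g) :
    Exact (quotSMulTopMap x f) (quotSMulTopHomEquiv.symm g) := by
  refine (Submodule.mkQ_surjective _).forall.2 fun z ↦ ⟨fun hz ↦ ?_, ?_⟩
  · obtain ⟨k, rfl⟩ := (hfg z).1 hz
    exact ⟨Submodule.Quotient.mk k, rfl⟩
  · rintro ⟨k, hk⟩
    obtain ⟨k, rfl⟩ := Submodule.mkQ_surjective _ k
    rw [← hk]
    exact hfg.apply_apply_eq_zero k

lemma quotSMulTopHomEquiv_symm_surjective (hg : Surjective g) :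
    Surjective (quotSMulTopHomEquiv (x := x).symm g) :=
  fun n ↦ (hg n).imp' (Submodule.mkQ _) fun _ h ↦ h

/-- The connecting map of the snake lemma for multiplication by `x` on `0 → K → F → N → 0`. -/
lemma exists_exact_quotSMulTopMap (hF : IsSMulRegular F x) (hf : Injective f) (hfg : Exact f g)
    (hg : Surjective g) :
    ∃ i : N →ₗ[A ⧸ Ideal.span {x}] QuotSMulTop x K, Injective i ∧ Exact i (quotSMulTopMap x f) := by
  have hN : Exact (LinearMap.id : N →ₗ[A] N) (LinearMap.lsmul A N x) := fun n ↦
    ⟨fun _ ↦ ⟨n, rfl⟩, fun _ ↦ smul_eq_zero_of_isScalarTower_quotient_span_singleton n⟩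
  have hF' : Exact (0 : PUnit.{1} →ₗ[A] F) (LinearMap.lsmul A F x) :=
    (LinearMap.exact_zero_iff_injective _ _).2 hF
  have h₁ : f ∘ₗ LinearMap.lsmul A K x = LinearMap.lsmul A F x ∘ₗ f :=
    LinearMap.ext fun k ↦ map_smul f x k
  have h₂ : g ∘ₗ LinearMap.lsmul A F x = LinearMap.lsmul A N x ∘ₗ g :=
    LinearMap.ext fun z ↦ map_smul g x z
  have hK := LinearMap.exact_lsmul_mkQ_smul_top K x
  let δ := SnakeLemma.δ' _ _ _ f g hfg f g hfg h₁ h₂ LinearMap.id hN _ hK hg hf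
  refine ⟨δ.extendScalarsOfSurjective Ideal.Quotient.mk_surjective, ?_, ?_⟩
  · exact (LinearMap.exact_zero_iff_injective PUnit δ).1 <|
      SnakeLemma.exact_δ'_right _ _ _ f g hfg f g hfg h₁ h₂ 0 hF' LinearMap.id hN _ hK hg hf 0
        (by simp) injective_id
  · exact SnakeLemma.exact_δ'_left _ _ _ f g hfg f g hfg h₁ h₂ LinearMap.id hN _ hK _
      (LinearMap.exact_lsmul_mkQ_smul_top F x) hg hf (QuotSMulTop.map x f) rfl
        (Submodule.mkQ_surjective _)

end Reduction

section ExtQuotient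

open Function

variable {A : Type u} [CommRing A] {x : A}

/-- Reducing a free presentation of `K` modulo `x` keeps it exact, so both sides are computed from
it by dimension shifting. -/
theorem subsingleton_ext_quotSMulTop_iff {K : Type u} [AddCommGroup K] [Module A K] (X : Type u)
    [AddCommGroup X] [Module A X] [Module (A ⧸ Ideal.span {x}) X]
    [IsScalarTower A (A ⧸ Ideal.span {x}) X] (hA : IsSMulRegular A x) (hK : IsSMulRegular K x)
    (n : ℕ) :
    Subsingleton (Ext (ModuleCat.of (A ⧸ Ideal.span {x}) (QuotSMulTop x K))
      (ModuleCat.of (A ⧸ Ideal.span {x}) X) (n + 1)) ↔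
    Subsingleton (Ext (ModuleCat.of A K) (ModuleCat.of A X) (n + 1)) := by
  induction n generalizing K with
  | zero =>
    obtain ⟨L, f, g, hf, hfg, hg⟩ := exists_finsupp_presentation A K
    rw [zero_add, subsingleton_ext_one_iff_of_exact hf hfg hg,
      subsingleton_ext_one_iff_of_exact (quotSMulTopMap_injective hf hfg hK)
        (quotSMulTopMap_exact hfg hg) (quotSMulTopMap_surjective hg)]
    exact forall_exists_comp_quotSMulTopMap_eq_iff f
  | succ n ih =>
    obtain ⟨L, f, g, hf, hfg, hg⟩ := exists_finsupp_presentation A K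
    rw [subsingleton_ext_add_two_iff_of_exact hf hfg hg,
      subsingleton_ext_add_two_iff_of_exact (quotSMulTopMap_injective hf hfg hK)
        (quotSMulTopMap_exact hfg hg) (quotSMulTopMap_surjective hg)]
    exact ih (hA.finsupp.of_injective f hf)

variable {N : Type u} [AddCommGroup N] [Module A N] [Module (A ⧸ Ideal.span {x}) N]
  [IsScalarTower A (A ⧸ Ideal.span {x}) N]

/-- The syzygy `K` of `N` over `A` and its syzygy `L` over `A ⧸ (x)` are related by a short exact
sequence `0 → N → K / xK → L → 0`. -/
theorem exists_exact_syzygies {K F : Type u} [AddCommGroup K] [Module A K] [AddCommGroup F]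
    [Module A F] {f : K →ₗ[A] F} {g : F →ₗ[A] N} (hF : IsSMulRegular F x)
    (hf : Injective f) (hfg : Exact f g) (hg : Surjective g) :
    ∃ (L : ModuleCat.{u} (A ⧸ Ideal.span {x})) (i : N →ₗ[A ⧸ Ideal.span {x}] QuotSMulTop x K)
      (j : QuotSMulTop x K →ₗ[A ⧸ Ideal.span {x}] L)
      (k : L →ₗ[A ⧸ Ideal.span {x}] QuotSMulTop x F),
      Injective i ∧ Exact i j ∧ Surjective j ∧
        Injective k ∧ Exact k (quotSMulTopHomEquiv.symm g) := by
  obtain ⟨i, hi, hif⟩ := exists_exact_quotSMulTopMap hF hf hfg hg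
  refine ⟨.of _ (LinearMap.range (quotSMulTopMap x f)), i,
    (quotSMulTopMap x f).rangeRestrict, (LinearMap.range (quotSMulTopMap x f)).subtype, hi, ?_,
    LinearMap.surjective_rangeRestrict _, Submodule.injective_subtype _, ?_⟩
  · rwa [LinearMap.exact_iff, LinearMap.ker_rangeRestrict, ← LinearMap.exact_iff]
  · rw [LinearMap.exact_iff, Submodule.range_subtype, ← LinearMap.exact_iff]
    exact exact_quotSMulTopMap_quotSMulTopHomEquiv_symm hfg

variable {X : Type u} [AddCommGroup X] [Module A X] [Module (A ⧸ Ideal.span {x}) X]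
  [IsScalarTower A (A ⧸ Ideal.span {x}) X]

/-- Here `K` is the reduction modulo `x` of the syzygy of `N` over `A`, and `L` is the syzygy of `N`
over `A ⧸ (x)`. -/
lemma exists_exact_forall_subsingleton_ext_iff (hA : IsSMulRegular A x) :
    ∃ (K L : ModuleCat.{u} (A ⧸ Ideal.span {x})) (i : N →ₗ[A ⧸ Ideal.span {x}] K)
      (j : K →ₗ[A ⧸ Ideal.span {x}] L), Injective i ∧ Exact i j ∧ Surjective j ∧
      ∀ n, (Subsingleton (Ext K (.of _ X) (n + 1)) ↔
          Subsingleton (Ext (ModuleCat.of A N) (.of A X) (n + 2))) ∧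
        (Subsingleton (Ext L (.of _ X) (n + 1)) ↔
          Subsingleton (Ext (ModuleCat.of (A ⧸ Ideal.span {x}) N) (.of _ X) (n + 2))) := by
  obtain ⟨K, f, g, hf, hfg, hg⟩ := exists_finsupp_presentation A N
  obtain ⟨L, i, j, k, hi, hij, hj, hk, hkg⟩ := exists_exact_syzygies hA.finsupp hf hfg hg
  refine ⟨.of _ (QuotSMulTop x K), L, i, j, hi, hij, hj, fun n ↦ ⟨?_, ?_⟩⟩
  · rw [subsingleton_ext_add_two_iff_of_exact hf hfg hg]
    exact subsingleton_ext_quotSMulTop_iff X hA (hA.finsupp.of_injective f hf) n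
  · exact (subsingleton_ext_add_two_iff_of_exact hk hkg
      (quotSMulTopHomEquiv_symm_surjective hg) n).symm

lemma subsingleton_ext_of_quotient (hA : IsSMulRegular A x) {n : ℕ}
    (h₁ : Subsingleton (Ext (ModuleCat.of (A ⧸ Ideal.span {x}) N) (.of _ X) (n + 1)))
    (h₂ : Subsingleton (Ext (ModuleCat.of (A ⧸ Ideal.span {x}) N) (.of _ X) (n + 2))) :
    Subsingleton (Ext (ModuleCat.of A N) (.of A X) (n + 2)) := by
  obtain ⟨K, L, i, j, hi, hij, hj, hext⟩ :=
    exists_exact_forall_subsingleton_ext_iff (N := N) (X := X) hA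
  exact (hext n).1.1 <| subsingleton_ext_X₂ (shortExact_shortComplexOfCompEqZero hi hij hj) h₁
    ((hext n).2.2 h₂)

lemma subsingleton_ext_quotient (hA : IsSMulRegular A x) {n : ℕ}
    (h₁ : Subsingleton (Ext (ModuleCat.of A N) (.of A X) (n + 2)))
    (h₂ : Subsingleton (Ext (ModuleCat.of (A ⧸ Ideal.span {x}) N) (.of _ X) (n + 3))) :
    Subsingleton (Ext (ModuleCat.of (A ⧸ Ideal.span {x}) N) (.of _ X) (n + 1)) := by
  obtain ⟨K, L, i, j, hi, hij, hj, hext⟩ :=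
    exists_exact_forall_subsingleton_ext_iff (N := N) (X := X) hA
  exact subsingleton_ext_X₁ (shortExact_shortComplexOfCompEqZero hi hij hj) ((hext n).1.2 h₁)
    ((hext (n + 1)).2.2 h₂)

end ExtQuotient

section ProjectiveDimension

open Function IsLocalRing

lemma isLocalRing_quotient_span_singleton {R : Type*} [CommRing R] [IsLocalRing R] {x : R}
    (hx : x ∈ maximalIdeal R) : IsLocalRing (R ⧸ Ideal.span {x}) := by
  have : Nontrivial (R ⧸ Ideal.span {x}) := Ideal.Quotient.nontrivial_iff.2
    (Ideal.span_singleton_ne_top hx)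
  exact .of_surjective' _ Ideal.Quotient.mk_surjective

variable {R : Type u} [CommRing R]

lemma hasProjectiveDimensionLT_iff_of_exact {K P N : Type u} [AddCommGroup K] [Module R K]
    [AddCommGroup P] [Module R P] [Module.Projective R P] [AddCommGroup N] [Module R N]
    {f : K →ₗ[R] P} {g : P →ₗ[R] N} (hf : Injective f) (hfg : Exact f g) (hg : Surjective g)
    (n : ℕ) :
    HasProjectiveDimensionLT (ModuleCat.of R N) (n + 2) ↔
      HasProjectiveDimensionLT (ModuleCat.of R K) (n + 1) :=
  (shortExact_shortComplexOfCompEqZero hf hfg hg).hasProjectiveDimensionLT_X₃_iff n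
    (inferInstanceAs (Projective (ModuleCat.of R P)))

variable [IsNoetherianRing R]

variable (R) in
lemma exists_fin_presentation (N : Type u) [AddCommGroup N] [Module R N] [Module.Finite R N] :
    ∃ (n : ℕ) (K : ModuleCat.{u} R) (f : K →ₗ[R] Fin n → R) (g : (Fin n → R) →ₗ[R] N),
      Module.Finite R K ∧ Injective f ∧ Exact f g ∧ Surjective g := by
  obtain ⟨n, g, hg⟩ := Module.Finite.exists_fin' R N
  exact ⟨n, .of R (LinearMap.ker g), Submodule.subtype _, g,
    inferInstanceAs (Module.Finite R (LinearMap.ker g)), Submodule.injective_subtype _,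
    LinearMap.exact_subtype_ker_map g, hg⟩

variable [IsLocalRing R]

lemma hasProjectiveDimensionLT_of_quotSMulTop {x : R} (hx : x ∈ maximalIdeal R)
    (hR : IsSMulRegular R x) {K : Type u} [AddCommGroup K] [Module R K] [Module.Finite R K]
    (hK : IsSMulRegular K x) {n : ℕ}
    (h : HasProjectiveDimensionLT (ModuleCat.of (R ⧸ Ideal.span {x}) (QuotSMulTop x K)) (n + 1)) :
    HasProjectiveDimensionLT (ModuleCat.of R K) (n + 1) := by
  induction n generalizing K with
  | zero =>
    have := isLocalRing_quotient_span_singleton hx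
    have : Module.Projective (R ⧸ Ideal.span {x}) (QuotSMulTop x K) :=
      (IsProjective.iff_projective _).2 (projective_iff_hasProjectiveDimensionLT_one.2 h)
    have : Module.Finite (R ⧸ Ideal.span {x}) (QuotSMulTop x K) :=
      .of_restrictScalars_finite R _ _
    have : Module.FinitePresentation R K := Module.finitePresentation_of_finite R K
    have : Module.Free R K :=
      (Module.free_quotSMulTop_iff_free R K (maximalIdeal_le_jacobson _ hx) hK).1
        Module.free_of_flat_of_isLocalRing
    infer_instance
  | succ n ih =>
    obtain ⟨m, L, f, g, _, hf, hfg, hg⟩ := exists_fin_presentation R K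
    have hF : IsSMulRegular (Fin m → R) x := .pi fun _ ↦ hR
    rw [hasProjectiveDimensionLT_iff_of_exact hf hfg hg]
    rw [hasProjectiveDimensionLT_iff_of_exact (quotSMulTopMap_injective hf hfg hK)
      (quotSMulTopMap_exact hfg hg) (quotSMulTopMap_surjective hg)] at h
    exact ih (hF.of_injective f hf) h

end ProjectiveDimension

section InjectiveDimension

variable {R : Type u} [CommRing R]

lemma injective_of_subsingleton_ext_one_quotient (X : ModuleCat.{u} R)
    (h : ∀ I : Ideal R, Subsingleton (Ext (ModuleCat.of R (R ⧸ I)) X 1)) : Injective X := by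
  have hX : Module.Baer R X := fun I φ ↦ by
    obtain ⟨ψ, hψ⟩ := (subsingleton_ext_one_iff_of_exact I.injective_subtype
      (LinearMap.exact_subtype_mkQ I) I.mkQ_surjective).1 (h I) φ
    exact ⟨ψ, fun r hr ↦ LinearMap.congr_fun hψ ⟨r, hr⟩⟩
  exact (Module.injective_iff_injective_object R X).1 hX.injective

theorem hasInjectiveDimensionLT_of_subsingleton_ext_quotient (X : ModuleCat.{u} R) (n : ℕ)
    (h : ∀ I : Ideal R, Subsingleton (Ext (ModuleCat.of R (R ⧸ I)) X (n + 1))) :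
    HasInjectiveDimensionLT X (n + 1) := by
  induction n generalizing X with
  | zero =>
    exact injective_iff_hasInjectiveDimensionLT_one.1
      (injective_of_subsingleton_ext_one_quotient X h)
  | succ n ih =>
    obtain ⟨P⟩ := EnoughInjectives.presentation X
    have hS := P.shortExact_shortComplex
    refine (hS.hasInjectiveDimensionLT_X₃_iff n P.injective).1 <| ih _ fun I ↦ ?_
    refine subsingleton_of_forall_eq 0 fun e ↦ ?_
    obtain ⟨e', rfl⟩ := Ext.covariant_sequence_exact₃ _ hS e rfl ((h I).elim _ _)
    rw [e'.eq_zero_of_injective, Ext.zero_comp]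

end InjectiveDimension

section RegularLocalRing

open IsLocalRing

lemma exists_ringKrullDim_eq_natCast (R : Type*) [CommRing R] [FiniteRingKrullDim R] :
    ∃ d : ℕ, ringKrullDim R = d :=
  ⟨_, Order.krullDim_eq_length_of_finiteDimensionalOrder⟩

lemma span_singleton_sum_sup_span_erase {R : Type*} [CommRing R] [DecidableEq R] {s : Finset R}
    {a : R → R} {y : R} (hy : y ∈ s) (hay : IsUnit (a y)) :
    Ideal.span {∑ z ∈ s, a z * z} ⊔ Ideal.span (s.erase y : Set R) = Ideal.span (s : Set R) := by
  refine le_antisymm (sup_le ?_ (Ideal.span_mono (Finset.coe_subset.2 (s.erase_subset y))))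
    (Ideal.span_le.2 fun z hz ↦ ?_)
  · exact (Ideal.span_singleton_le_iff_mem _).2 <|
      Ideal.sum_mem _ fun z hz ↦ Ideal.mul_mem_left _ _ (Ideal.subset_span hz)
  · by_cases hzy : z = y
    · rw [SetLike.mem_coe, hzy, ← Ideal.unit_mul_mem_iff_mem _ hay,
        eq_sub_of_add_eq (s.add_sum_erase (fun z ↦ a z * z) hy)]
      exact sub_mem (Ideal.mem_sup_left (Ideal.mem_span_singleton_self _)) <|
        Ideal.mem_sup_right <| Ideal.sum_mem _ fun w hw ↦
          Ideal.mul_mem_left _ _ (Ideal.subset_span hw)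
    · exact Ideal.mem_sup_right (Ideal.subset_span (Finset.mem_erase.2 ⟨hzy, hz⟩))

section IsLocalRing

variable {R : Type*} [CommRing R] [IsLocalRing R]

lemma exists_isUnit_of_sum_mul_notMem {s : Finset R} (hs : (s : Set R) ⊆ maximalIdeal R)
    {a : R → R} (ha : ∑ z ∈ s, a z * z ∉ maximalIdeal R * maximalIdeal R) :
    ∃ y ∈ s, IsUnit (a y) := by
  by_contra! h
  exact ha (Ideal.sum_mem _ fun y hy ↦ Ideal.mul_mem_mul (h y hy) (hs hy))

/-- A minimal generating set of the maximal ideal of `R` has a member that can be exchanged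
for `x`. -/
lemma spanFinrank_maximalIdeal_quotient_lt [IsNoetherianRing R] {x : R}
    (hx : x ∈ maximalIdeal R) (hx2 : x ∉ maximalIdeal R * maximalIdeal R)
    [IsLocalRing (R ⧸ Ideal.span {x})] :
    (maximalIdeal (R ⧸ Ideal.span {x})).spanFinrank < (maximalIdeal R).spanFinrank := by
  classical
  obtain ⟨s, hs, hspan⟩ := Submodule.FG.exists_span_finset_card_eq_spanFinrank
    (IsNoetherian.noetherian (maximalIdeal R))
  obtain ⟨a, -, rfl⟩ := Submodule.mem_span_finset.1 (hspan ▸ hx : x ∈ Submodule.span R (s : Set R))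
  obtain ⟨y, hy, hay⟩ := exists_isUnit_of_sum_mul_notMem (hspan ▸ Submodule.subset_span) hx2
  have hmap : maximalIdeal (R ⧸ Ideal.span {∑ z ∈ s, a z • z}) =
      (Ideal.span (s.erase y : Set R)).map (Ideal.Quotient.mk _) := by
    rw [← map_maximalIdeal_of_surjective _ Ideal.Quotient.mk_surjective, ← hspan]
    refine (congrArg _ (span_singleton_sum_sup_span_erase hy hay).symm).trans ?_
    rw [Ideal.map_sup]
    exact sup_eq_right.2 ((Ideal.map_quotient_self _).trans_le bot_le)
  calc (maximalIdeal (R ⧸ Ideal.span {∑ z ∈ s, a z • z})).spanFinrank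
    _ ≤ (Ideal.span (s.erase y : Set R)).spanFinrank :=
      hmap ▸ Ideal.spanFinrank_map_le_of_fg _ ⟨s.erase y, rfl⟩
    _ ≤ (s.erase y : Set R).ncard :=
      Submodule.spanFinrank_span_le_ncard_of_finite (Finset.finite_toSet _)
    _ < s.card := by
      rw [Set.ncard_coe_finset]
      exact Finset.card_erase_lt_of_mem hy
    _ = (maximalIdeal R).spanFinrank := hs

end IsLocalRing

section IsRegularLocalRing

variable {R : Type*} [CommRing R] [IsRegularLocalRing R]

lemma isRegularLocalRing_quotient_span_singleton {x : R}
    (hx : x ∈ maximalIdeal R) (hx2 : x ∉ maximalIdeal R * maximalIdeal R) {d : ℕ}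
    (hd : ringKrullDim R = (d + 1 : ℕ)) :
    IsRegularLocalRing (R ⧸ Ideal.span {x}) ∧ ringKrullDim (R ⧸ Ideal.span {x}) = d := by
  have := isLocalRing_quotient_span_singleton hx
  have hdim : (d : WithBot ℕ∞) ≤ ringKrullDim (R ⧸ Ideal.span {x}) := by
    have h := ringKrullDim_le_ringKrullDim_quotient_add_card ({x} : Finset R)
      (by simpa [ringJacobson_eq_maximalIdeal] using hx)
    rwa [Finset.coe_singleton, Finset.card_singleton, hd, Nat.cast_add,
      ENat.WithBot.add_le_add_natCast_right_iff] at h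
  have hrank : (maximalIdeal (R ⧸ Ideal.span {x})).spanFinrank ≤ d := by
    have h := IsRegularLocalRing.spanFinrank_maximalIdeal (R := R)
    rw [hd, Nat.cast_inj] at h
    exact Nat.lt_succ_iff.1 ((spanFinrank_maximalIdeal_quotient_lt hx hx2).trans_eq h)
  have hle := ringKrullDim_le_spanFinrank_maximalIdeal (R ⧸ Ideal.span {x})
  exact ⟨.of_spanFinrank_maximalIdeal_le _ ((Nat.cast_le.2 hrank).trans hdim),
    (hle.trans (Nat.cast_le.2 hrank)).antisymm hdim⟩

lemma maximalIdeal_eq_bot_iff_ringKrullDim_eq_zero :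
    maximalIdeal R = ⊥ ↔ ringKrullDim R = 0 := by
  rw [← Submodule.spanFinrank_eq_zero_iff_eq_bot (IsNoetherian.noetherian _),
    ← Nat.cast_inj (R := WithBot ℕ∞), IsRegularLocalRing.spanFinrank_maximalIdeal, Nat.cast_zero]

/-- Prime avoidance, applied to `𝔪²` and the finitely many minimal primes. -/
lemma exists_mem_maximalIdeal_notMem_sq_notMem_minimalPrimes (hR : ringKrullDim R ≠ 0) :
    ∃ x ∈ maximalIdeal R, x ∉ maximalIdeal R * maximalIdeal R ∧ ∀ p ∈ minimalPrimes R, x ∉ p := by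
  by_contra! h
  have hcover : (maximalIdeal R : Set R) ⊆
      ⋃ I ∈ insert (maximalIdeal R * maximalIdeal R) (minimalPrimes R), (I : Set R) := by
    intro x hx
    by_cases hx2 : x ∈ maximalIdeal R * maximalIdeal R
    · exact Set.mem_biUnion (Set.mem_insert _ _) hx2
    · obtain ⟨p, hp, hxp⟩ := h x hx hx2
      exact Set.mem_biUnion (Set.mem_insert_of_mem _ hp) hxp
  rw [Ideal.subset_union_prime_finite (f := fun I ↦ I)
    ((minimalPrimes.finite_of_isNoetherianRing R).insert _) (maximalIdeal R * maximalIdeal R)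
    (maximalIdeal R * maximalIdeal R)
    (fun I hI hne _ ↦ ((Set.mem_insert_iff.1 hI).resolve_left hne).1.1)] at hcover
  obtain ⟨I, rfl | hI, hle⟩ := hcover
  · exact hR <| maximalIdeal_eq_bot_iff_ringKrullDim_eq_zero.1 <|
      Submodule.eq_bot_of_le_smul_of_le_jacobson_bot _ _ (IsNoetherian.noetherian _) hle
        (maximalIdeal_le_jacobson _)
  · have hIp : I.IsPrime := hI.1.1
    obtain rfl : maximalIdeal R = I := le_antisymm hle (le_maximalIdeal hIp.ne_top)
    exact hR (by rw [← maximalIdeal_height_eq_ringKrullDim, Ideal.height_eq_zero_iff.2 hI]; rfl)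

end IsRegularLocalRing

lemma isDomain_of_isPrime_span_singleton {R : Type*} [CommRing R] [IsLocalRing R]
    [IsNoetherianRing R] {x : R} (hx : x ∈ maximalIdeal R) (hxp : ∀ p ∈ minimalPrimes R, x ∉ p)
    (hprime : (Ideal.span {x}).IsPrime) : IsDomain R := by
  obtain ⟨p, hp, hpx⟩ := Ideal.exists_minimalPrimes_le (bot_le (a := Ideal.span {x}))
  have : p.IsPrime := hp.1.1
  have hle : p ≤ maximalIdeal R • p := fun a ha ↦ by
    obtain ⟨b, rfl⟩ := Ideal.mem_span_singleton.1 (hpx ha)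
    exact Submodule.smul_mem_smul hx ((this.mem_or_mem ha).resolve_left (hxp p hp))
  obtain rfl : p = ⊥ := Submodule.eq_bot_of_le_smul_of_le_jacobson_bot _ p
    (IsNoetherian.noetherian p) hle (maximalIdeal_le_jacobson _)
  exact IsDomain.of_bot_isPrime R

theorem isDomain_of_isRegularLocalRing (R : Type*) [CommRing R] [IsRegularLocalRing R] :
    IsDomain R := by
  obtain ⟨d, hd⟩ := exists_ringKrullDim_eq_natCast R
  induction d generalizing R with
  | zero =>
    exact (isField_iff_maximalIdeal_eq.2
      (maximalIdeal_eq_bot_iff_ringKrullDim_eq_zero.2 hd)).isDomain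
  | succ d ih =>
    obtain ⟨x, hx, hx2, hxp⟩ := exists_mem_maximalIdeal_notMem_sq_notMem_minimalPrimes
      (R := R) (hd ▸ by exact_mod_cast d.succ_ne_zero)
    obtain ⟨_, hd'⟩ := isRegularLocalRing_quotient_span_singleton hx hx2 hd
    exact isDomain_of_isPrime_span_singleton hx hxp <|
      (Ideal.Quotient.isDomain_iff_prime _).1 (ih _ hd')

theorem hasProjectiveDimensionLT_of_isRegularLocalRing {R : Type u} [CommRing R]
    [IsRegularLocalRing R] {d : ℕ} (hd : ringKrullDim R = d) (N : Type u) [AddCommGroup N]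
    [Module R N] [Module.Finite R N] : HasProjectiveDimensionLT (ModuleCat.of R N) (d + 1) := by
  induction d generalizing R N with
  | zero =>
    let _ := (isField_iff_maximalIdeal_eq.2
      (maximalIdeal_eq_bot_iff_ringKrullDim_eq_zero.2 hd)).toField
    have : Module.Free R N := Module.Free.of_divisionRing R N
    infer_instance
  | succ d ih =>
    obtain ⟨x, hx, hx2, -⟩ := exists_mem_maximalIdeal_notMem_sq_notMem_minimalPrimes
      (R := R) (hd ▸ by exact_mod_cast d.succ_ne_zero)
    obtain ⟨_, hd'⟩ := isRegularLocalRing_quotient_span_singleton hx hx2 hd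
    have := isDomain_of_isRegularLocalRing R
    have hreg : IsSMulRegular R x :=
      (isRegular_iff_ne_zero.2 (ne_of_mem_of_not_mem (zero_mem _) hx2).symm).left
    obtain ⟨m, K, f, g, _, hf, hfg, hg⟩ := exists_fin_presentation R N
    have : Module.Finite (R ⧸ Ideal.span {x}) (QuotSMulTop x K) := .of_restrictScalars_finite R _ _
    rw [hasProjectiveDimensionLT_iff_of_exact hf hfg hg]
    have hF : IsSMulRegular (Fin m → R) x := .pi fun _ ↦ hreg
    exact hasProjectiveDimensionLT_of_quotSMulTop hx hreg (hF.of_injective f hf) (ih hd' _)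

end RegularLocalRing

section ExtIndex

/-- Vanishing of `Ext N X i` for all large `i` forces it for all `i > d`: in the terminology of
AB rings, the Ext-index of `R` is at most `d`. The condition is imposed on all modules, finitely
generated or not, since it is applied to character modules. -/
def HasExtIndexLE (R : Type u) [CommRing R] (d : ℕ) : Prop :=
  ∀ N X : ModuleCat.{u} R, (∃ n, ∀ i, n ≤ i → Subsingleton (Ext N X i)) →
    ∀ i, d < i → Subsingleton (Ext N X i)

/-- Baer's criterion bounds the injective dimension of every module by the projective dimension
of the cyclic ones. -/
lemma hasExtIndexLE_of_isRegularLocalRing {R : Type u} [CommRing R] [IsRegularLocalRing R] {d : ℕ}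
    (hd : ringKrullDim R = d) : HasExtIndexLE R d := by
  intro N X _ i hi
  have : HasInjectiveDimensionLT X (d + 1) :=
    hasInjectiveDimensionLT_of_subsingleton_ext_quotient X d fun I ↦
      have := hasProjectiveDimensionLT_of_isRegularLocalRing hd (R ⧸ I)
      HasProjectiveDimensionLT.subsingleton _ (d + 1) (d + 1) le_rfl _
  exact HasInjectiveDimensionLT.subsingleton X (d + 1) i hi N

variable {A B : Type u} [CommRing A] [CommRing B]

lemma subsingleton_ext_restrictScalars_iff (e : A ≃+* B) (N X : ModuleCat.{u} B) (i : ℕ) :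
    Subsingleton (Ext ((ModuleCat.restrictScalars e.toRingHom).obj N)
      ((ModuleCat.restrictScalars e.toRingHom).obj X) i) ↔ Subsingleton (Ext N X i) :=
  (Equiv.ofBijective _ ((ModuleCat.restrictScalars
    e.toRingHom).mapExt_bijective_of_preservesProjectiveObjects N X i)).subsingleton_congr.symm

lemma HasExtIndexLE.of_ringEquiv {d : ℕ} (h : HasExtIndexLE A d) (e : A ≃+* B) :
    HasExtIndexLE B d := by
  intro N X hNX
  simp only [← subsingleton_ext_restrictScalars_iff e N X] at hNX ⊢
  exact h _ _ hNX

lemma HasExtIndexLE.quotient_span_singleton {x : A} {d : ℕ} (h : HasExtIndexLE A (d + 1))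
    (hx : IsSMulRegular A x) : HasExtIndexLE (A ⧸ Ideal.span {x}) d := by
  intro N X ⟨n, hn⟩
  let _ := Module.compHom N (algebraMap A (A ⧸ Ideal.span {x}))
  let _ := Module.compHom X (algebraMap A (A ⧸ Ideal.span {x}))
  have : IsScalarTower A (A ⧸ Ideal.span {x}) N := .of_algebraMap_smul fun _ _ ↦ rfl
  have : IsScalarTower A (A ⧸ Ideal.span {x}) X := .of_algebraMap_smul fun _ _ ↦ rfl
  have hA : ∀ i, d + 1 < i → Subsingleton (Ext (ModuleCat.of A N) (.of A X) i) := by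
    refine h _ _ ⟨n + 2, fun i hi ↦ ?_⟩
    obtain ⟨i, rfl⟩ := Nat.exists_eq_add_of_le' ((Nat.le_add_left 2 n).trans hi)
    exact subsingleton_ext_of_quotient hx (hn _ (by omega)) (hn _ (by omega))
  have descend (k : ℕ) : ∀ j, n ≤ j + 1 + 2 * k → d < j + 1 → Subsingleton (Ext N X (j + 1)) := by
    induction k with
    | zero => exact fun j hj _ ↦ hn _ hj
    | succ k ih =>
      intro j hj hd
      exact subsingleton_ext_quotient hx (hA _ (by omega)) (ih (j + 2) (by omega) (by omega))
  intro i hi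
  obtain ⟨j, rfl⟩ := Nat.exists_eq_add_of_le' (Nat.zero_lt_of_lt hi)
  exact descend n j (by omega) hi

open RingTheory.Sequence

variable {Q : Type u} [CommRing Q]

lemma isSMulRegular_mk_of_isWeaklyRegular_append {l : List Q} {x : Q}
    (h : IsWeaklyRegular Q (l ++ [x])) :
    IsSMulRegular (Q ⧸ Ideal.ofList l) (Ideal.Quotient.mk (Ideal.ofList l) x) := by
  have hx := ((isWeaklyRegular_cons_iff _ _ _).1 ((isWeaklyRegular_append_iff _ _ _).1 h).2).1
  rw [smul_eq_mul, Ideal.mul_top] at hx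
  exact (isSMulRegular_algebraMap_iff _).2 hx

/-- The isomorphism `(Q ⧸ (l)) ⧸ (x) ≃ Q ⧸ (l, x)`, for killing a sequence one element at a time. -/
noncomputable def quotientOfListAppendEquiv (l : List Q) (x : Q) :
    (Q ⧸ Ideal.ofList l) ⧸ Ideal.span {Ideal.Quotient.mk (Ideal.ofList l) x} ≃+*
      Q ⧸ Ideal.ofList (l ++ [x]) :=
  (Ideal.quotEquivOfEq (by rw [Ideal.map_span, Set.image_singleton])).trans <|
    (DoubleQuot.quotQuotEquivQuotSup (Ideal.ofList l) (Ideal.span {x})).trans <|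
      Ideal.quotEquivOfEq (by rw [Ideal.ofList_append, Ideal.ofList_singleton])

theorem HasExtIndexLE.quotient_ofList {f : List Q} {d : ℕ} (h : HasExtIndexLE Q (d + f.length))
    (hf : IsWeaklyRegular Q f) : HasExtIndexLE (Q ⧸ Ideal.ofList f) d := by
  induction f using List.reverseRecOn generalizing d with
  | nil =>
    exact h.of_ringEquiv
      ((RingEquiv.quotientBot Q).symm.trans (Ideal.quotEquivOfEq Ideal.ofList_nil.symm))
  | append_singleton l x ih =>
    rw [List.length_append, List.length_singleton, ← add_assoc, add_right_comm] at h
    have hl := ih h ((isWeaklyRegular_append_iff _ _ _).1 hf).1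
    exact (hl.quotient_span_singleton (isSMulRegular_mk_of_isWeaklyRegular_append hf)).of_ringEquiv
      (quotientOfListAppendEquiv l x)

end ExtIndex

section TorExtDuality

open TensorProduct CharacterModule

variable {R : Type u} [CommRing R]

section CharacterModule

variable {A B C : Type*} [AddCommGroup A] [Module R A] [AddCommGroup B] [Module R B]
  [AddCommGroup C] [Module R C] {f : A →ₗ[R] B} {g : B →ₗ[R] C}

lemma exists_dual_apply_eq_of_exact (h : Function.Exact f g) {c : CharacterModule B}
    (hc : dual f c = 0) : ∃ c' : CharacterModule C, dual g c' = c := by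
  have hker : (LinearMap.ker g).toAddSubgroup ≤ AddMonoidHom.ker (G := B) c := by
    intro z hz
    obtain ⟨y, rfl⟩ := (h z).1 hz
    exact DFunLike.congr_fun hc y
  let c₁ : CharacterModule (B ⧸ LinearMap.ker g) := QuotientAddGroup.lift _ c hker
  obtain ⟨c', hc'⟩ := dual_surjective_of_injective ((LinearMap.ker g).liftQ g le_rfl)
    (LinearMap.ker_eq_bot.1 (Submodule.ker_liftQ_eq_bot' _ _ rfl)) c₁
  exact ⟨c', DFunLike.ext _ _ fun z ↦ DFunLike.congr_fun hc' (Submodule.Quotient.mk z)⟩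

lemma exact_iff_forall_exists_dual_apply_eq (hgf : g ∘ₗ f = 0) :
    Function.Exact f g ↔ ∀ c : CharacterModule B, dual f c = 0 →
      ∃ c' : CharacterModule C, dual g c' = c := by
  refine ⟨fun h _ ↦ exists_dual_apply_eq_of_exact h, fun h ↦ ?_⟩
  rw [LinearMap.exact_iff]
  refine le_antisymm (fun z hz ↦ ?_) (LinearMap.range_le_ker_iff.2 hgf)
  suffices (LinearMap.range f).mkQ z = 0 by simpa using this
  refine eq_zero_of_character_apply fun c ↦ ?_
  obtain ⟨c', hc'⟩ := h (dual (LinearMap.range f).mkQ c) <| by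
    rw [← LinearMap.comp_apply, ← dual_comp, LinearMap.range_mkQ_comp, dual_zero,
      LinearMap.zero_apply]
  calc c ((LinearMap.range f).mkQ z) = c' (g z) := (DFunLike.congr_fun hc' z).symm
    _ = 0 := by rw [hz, map_zero]

end CharacterModule

variable {M P P₀ P₁ P₂ : Type*} [AddCommGroup M] [Module R M] [AddCommGroup P] [Module R P]
  [AddCommGroup P₀] [Module R P₀] [AddCommGroup P₁] [Module R P₁] [AddCommGroup P₂] [Module R P₂]

variable (M P) in
/-- The tensor-hom adjunction `Hom(P, M⋆) ≃ (M ⊗ P)⋆` for character modules, with the tensor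
factors in the order used by `Tor`. -/
noncomputable def homCharacterModuleEquiv :
    (P →ₗ[R] CharacterModule M) ≃ₗ[R] CharacterModule (M ⊗[R] P) :=
  homEquiv.trans (CharacterModule.congr (TensorProduct.comm R P M))

lemma dual_lTensor_homCharacterModuleEquiv (f : P₁ →ₗ[R] P₀) (φ : P₀ →ₗ[R] CharacterModule M) :
    dual (f.lTensor M) (homCharacterModuleEquiv M P₀ φ) =
      homCharacterModuleEquiv M P₁ (φ ∘ₗ f) := by
  refine DFunLike.ext _ _ fun z ↦ ?_
  induction z with
  | zero => rw [map_zero, map_zero]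
  | tmul m p => rfl
  | add x y hx hy => rw [map_add, map_add, hx, hy]

variable (M) in
lemma exact_lTensor_iff_forall_exists_comp_eq {f : P₂ →ₗ[R] P₁} {g : P₁ →ₗ[R] P₀}
    (hgf : g ∘ₗ f = 0) :
    Function.Exact (f.lTensor M) (g.lTensor M) ↔
      ∀ φ : P₁ →ₗ[R] CharacterModule M, φ ∘ₗ f = 0 →
        ∃ ψ : P₀ →ₗ[R] CharacterModule M, ψ ∘ₗ g = φ := by
  rw [exact_iff_forall_exists_dual_apply_eq
    (by rw [← LinearMap.lTensor_comp, hgf, LinearMap.lTensor_zero]),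
    (homCharacterModuleEquiv M P₁).surjective.forall]
  refine forall_congr' fun φ ↦ ?_
  rw [dual_lTensor_homCharacterModuleEquiv, LinearEquiv.map_eq_zero_iff,
    (homCharacterModuleEquiv M P₀).surjective.exists]
  simp only [dual_lTensor_homCharacterModuleEquiv, EmbeddingLike.apply_eq_iff_eq]

lemma isZero_Tor_succ_iff_exact_lTensor (M : ModuleCat.{u} R) {N : ModuleCat.{u} R}
    (P : ProjectiveResolution N) (i : ℕ) :
    IsZero (((Tor (ModuleCat.{u} R) (i + 1)).obj M).obj N) ↔
      Function.Exact ((P.complex.d (i + 2) (i + 1)).hom.lTensor M)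
        ((P.complex.d (i + 1) i).hom.lTensor M) := by
  refine (P.isoLeftDerivedObj ((MonoidalCategory.tensoringLeft (ModuleCat.{u} R)).obj M)
    (i + 1)).isZero_iff.trans ?_
  refine (HomologicalComplex.exactAt_iff_isZero_homology _ _).symm.trans ?_
  rw [HomologicalComplex.exactAt_iff' _ (i + 2) (i + 1) i (by simp) (by simp),
    ShortComplex.moduleCat_exact_iff_range_eq_ker, eq_comm, ← LinearMap.exact_iff]
  rfl

lemma subsingleton_ext_succ_iff_forall_exists_comp_eq {N : ModuleCat.{u} R}
    (P : ProjectiveResolution N) (X : ModuleCat.{u} R) (i : ℕ) :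
    Subsingleton (Ext N X (i + 1)) ↔
      ∀ φ : P.complex.X (i + 1) →ₗ[R] X, φ ∘ₗ (P.complex.d (i + 2) (i + 1)).hom = 0 →
        ∃ ψ : P.complex.X i →ₗ[R] X, ψ ∘ₗ (P.complex.d (i + 1) i).hom = φ := by
  constructor
  · intro h φ hφ
    obtain ⟨ψ, hψ⟩ := (P.extMk_eq_zero_iff (ModuleCat.ofHom φ) (i + 2) rfl
      (ModuleCat.hom_ext hφ) i rfl).1 (h.elim _ _)
    exact ⟨ψ.hom, congrArg ModuleCat.Hom.hom hψ⟩
  · intro h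
    refine subsingleton_of_forall_eq 0 fun e ↦ ?_
    obtain ⟨φ, hφ, rfl⟩ := P.extMk_surjective e (i + 2) rfl
    obtain ⟨ψ, hψ⟩ := h φ.hom (congrArg ModuleCat.Hom.hom hφ)
    exact (P.extMk_eq_zero_iff φ (i + 2) rfl hφ i rfl).2
      ⟨ModuleCat.ofHom ψ, ModuleCat.hom_ext hψ⟩

theorem isZero_Tor_succ_iff_subsingleton_ext_characterModule (M N : ModuleCat.{u} R) (i : ℕ) :
    IsZero (((Tor (ModuleCat.{u} R) (i + 1)).obj M).obj N) ↔
      Subsingleton (Ext N (.of R (CharacterModule M)) (i + 1)) := by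
  let P := projectiveResolution N
  have hd : (P.complex.d (i + 1) i).hom ∘ₗ (P.complex.d (i + 2) (i + 1)).hom = 0 := by
    rw [← ModuleCat.hom_comp, P.complex.d_comp_d, ModuleCat.hom_zero]
  rw [isZero_Tor_succ_iff_exact_lTensor M P, exact_lTensor_iff_forall_exists_comp_eq M hd]
  exact (subsingleton_ext_succ_iff_forall_exists_comp_eq P
    (ModuleCat.of R (CharacterModule M)) i).symm

lemma HasExtIndexLE.isZero_Tor {d : ℕ} (h : HasExtIndexLE R d) (M N : ModuleCat.{u} R)
    (hMN : ∃ n, ∀ i, n ≤ i → IsZero (((Tor (ModuleCat.{u} R) i).obj M).obj N)) {i : ℕ}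
    (hi : d < i) : IsZero (((Tor (ModuleCat.{u} R) i).obj M).obj N) := by
  have htor (j : ℕ) (hj : 0 < j) : IsZero (((Tor (ModuleCat.{u} R) j).obj M).obj N) ↔
      Subsingleton (Ext N (.of R (CharacterModule M)) j) := by
    obtain ⟨j, rfl⟩ := Nat.exists_eq_add_of_le' hj
    exact isZero_Tor_succ_iff_subsingleton_ext_characterModule M N j
  obtain ⟨n, hn⟩ := hMN
  exact (htor i (by omega)).2 <|
    h N _ ⟨n + 1, fun j hj ↦ (htor j (by omega)).1 (hn j (by omega))⟩ i hi

end TorExtDuality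

section CompleteIntersection

lemma IsRegularLocal.isRegularLocalRing {Q : Type u} [CommRing Q] [IsLocalRing Q]
    (hQ : IsRegularLocal Q) : IsRegularLocalRing Q := by
  obtain ⟨_, s, hs, hcard⟩ := hQ
  refine .of_spanFinrank_maximalIdeal_le _ (hcard ▸ Nat.cast_le.2 ?_)
  rw [← hs, ← Set.ncard_coe_finset]
  exact Submodule.spanFinrank_span_le_ncard_of_finite s.finite_toSet

open RingTheory.Sequence

lemma finiteRingKrullDim_quotient_ofList {Q : Type*} [CommRing Q] [IsLocalRing Q]
    [IsNoetherianRing Q] {f : List Q} (hf : IsRegular Q f) :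
    FiniteRingKrullDim (Q ⧸ Ideal.ofList f) := by
  have : Nontrivial (Q ⧸ Ideal.ofList f) := by
    rw [Ideal.Quotient.nontrivial_iff, ← Ideal.mul_top (Ideal.ofList f)]
    exact hf.top_ne_smul.symm
  have : IsLocalRing (Q ⧸ Ideal.ofList f) := .of_surjective' _ Ideal.Quotient.mk_surjective
  infer_instance

theorem hasExtIndexLE_quotient_ofList {Q : Type u} [CommRing Q] [IsRegularLocalRing Q]
    {f : List Q} (hf : IsRegular Q f) {d : ℕ} (hd : ringKrullDim (Q ⧸ Ideal.ofList f) = d) :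
    HasExtIndexLE (Q ⧸ Ideal.ofList f) d := by
  have hQ : ringKrullDim Q = (d + f.length : ℕ) := by
    rw [← ringKrullDim_add_length_eq_ringKrullDim_of_isRegular f hf, hd, Nat.cast_add]
  exact (hasExtIndexLE_of_isRegularLocalRing hQ).quotient_ofList hf.toIsWeaklyRegular

end CompleteIntersection

theorem stmt_8_general (Q : Type u) [CommRing Q] [IsLocalRing Q] (hQ : IsRegularLocal Q)
    (f : List Q) (hf : RingTheory.Sequence.IsRegular Q f)
    (M N : ModuleCat.{u} (Q ⧸ Ideal.ofList f))
    (htor : ∃ n : ℕ, ∀ i : ℕ, n ≤ i →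
      IsZero (((Tor (ModuleCat.{u} (Q ⧸ Ideal.ofList f)) i).obj M).obj N)) :
    ∀ i : ℕ, ringKrullDim (Q ⧸ Ideal.ofList f) < (i : WithBot ℕ∞) →
      IsZero (((Tor (ModuleCat.{u} (Q ⧸ Ideal.ofList f)) i).obj M).obj N) := by
  intro i hi
  have := hQ.isRegularLocalRing
  have := finiteRingKrullDim_quotient_ofList hf
  obtain ⟨d, hd⟩ := exists_ringKrullDim_eq_natCast (Q ⧸ Ideal.ofList f)
  rw [hd, Nat.cast_lt] at hi
  exact (hasExtIndexLE_quotient_ofList hf hd).isZero_Tor M N htor hi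

theorem stmt_8 (Q : Type u) [CommRing Q] [IsLocalRing Q] (hQ : IsRegularLocal Q)
    (f : List Q) (hf : RingTheory.Sequence.IsRegular Q f)
    (M N : ModuleCat.{u} (Q ⧸ Ideal.ofList f))
    [Module.Finite (Q ⧸ Ideal.ofList f) M] [Module.Finite (Q ⧸ Ideal.ofList f) N]
    (htor : ∃ n : ℕ, ∀ i : ℕ, n ≤ i →
      IsZero (((Tor (ModuleCat.{u} (Q ⧸ Ideal.ofList f)) i).obj M).obj N)) :
    ∀ i : ℕ, ringKrullDim (Q ⧸ Ideal.ofList f) < (i : WithBot ℕ∞) →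
      IsZero (((Tor (ModuleCat.{u} (Q ⧸ Ideal.ofList f)) i).obj M).obj N) :=
  stmt_8_general Q hQ f hf M N htor
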